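/- arXiv:2110.06670 — 2 statements merged into one kernel-verified Lean document; each statement's English description precedes it below -/
import Mathlib

section
/- Let Ω ⊆ ℝ³ be open and let f = (F, f₃) : Ω → ℝ³ be a smooth conformal map. Then ZF ≠ 0 on Ω and the classical type Schwarzian vanishes: S_CL(f) = Z³F/ZF − (3/2)·(Z²F/ZF)² = 0 on Ω. -/
noncomputable section

open Complex

/-- The underlying space of the first Heisenberg group: ℝ³ with coordinates (x, y, t). -/
abbrev Heis : Type := ℝ × ℝ × ℝ

/-- The left-invariant vector field X = ∂/∂x + 2y ∂/∂t, as a derivation. -/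
def XD {E : Type*} [NormedAddCommGroup E] [NormedSpace ℝ E] (u : Heis → E) (p : Heis) : E :=
  fderiv ℝ u p (1, 0, 2 * p.2.1)

/-- The left-invariant vector field Y = ∂/∂y − 2x ∂/∂t, as a derivation. -/
def YD {E : Type*} [NormedAddCommGroup E] [NormedSpace ℝ E] (u : Heis → E) (p : Heis) : E :=
  fderiv ℝ u p (0, 1, -(2 * p.1))

/-- The vector field T = ∂/∂t, as a derivation. -/
def TD {E : Type*} [NormedAddCommGroup E] [NormedSpace ℝ E] (u : Heis → E) (p : Heis) : E :=
  fderiv ℝ u p (0, 0, 1)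

/-- Z = (X − iY)/2. -/
def ZD (u : Heis → ℂ) (p : Heis) : ℂ := (XD u p - Complex.I * YD u p) / 2

/-- Z̄ = (X + iY)/2. -/
def ZbD (u : Heis → ℂ) (p : Heis) : ℂ := (XD u p + Complex.I * YD u p) / 2

/-- The complexification F = f₁ + i f₂ of the horizontal components. -/
def CF (f1 f2 : Heis → ℝ) : Heis → ℂ := fun p => (f1 p : ℂ) + (f2 p : ℂ) * Complex.I

/-- Complexification of a real-valued function. -/
def Cplx (u : Heis → ℝ) : Heis → ℂ := fun p => (u p : ℂ)

/-- The horizontal Jacobian J_F = Xf₁·Yf₂ − Yf₁·Xf₂. -/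
def JF (f1 f2 : Heis → ℝ) (p : Heis) : ℝ := XD f1 p * YD f2 p - YD f1 p * XD f2 p

/-- The contact equations on Ω. -/
def ContactOn (f1 f2 f3 : Heis → ℝ) (Ω : Set Heis) : Prop :=
  ∀ p ∈ Ω, XD f3 p - 2 * f2 p * XD f1 p + 2 * f1 p * XD f2 p = 0 ∧
           YD f3 p - 2 * f2 p * YD f1 p + 2 * f1 p * YD f2 p = 0

/-- f = (f₁,f₂,f₃) is conformal on Ω: smooth, contact, J_F > 0, and the conformality
equations hold. -/
def ConformalOn (f1 f2 f3 : Heis → ℝ) (Ω : Set Heis) : Prop :=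
  ContDiffOn ℝ (⊤ : ℕ∞) f1 Ω ∧ ContDiffOn ℝ (⊤ : ℕ∞) f2 Ω ∧ ContDiffOn ℝ (⊤ : ℕ∞) f3 Ω ∧
  ContactOn f1 f2 f3 Ω ∧ (∀ p ∈ Ω, 0 < JF f1 f2 p) ∧
  ∀ p ∈ Ω, (XD f1 p) ^ 2 + (XD f2 p) ^ 2 = (YD f1 p) ^ 2 + (YD f2 p) ^ 2 ∧
           XD f1 p * YD f1 p + XD f2 p * YD f2 p = 0

/-- The sub-Laplacian Δ_H = X² + Y². -/
def LapH {E : Type*} [NormedAddCommGroup E] [NormedSpace ℝ E] (u : Heis → E) (p : Heis) : E :=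
  XD (XD u) p + YD (YD u) p

/-- The CR Schwarzian derivative S_CR(f) = (1/2)·J_F·Z²(J_F⁻¹). -/
def SCR (f1 f2 : Heis → ℝ) (p : Heis) : ℂ :=
  (1 / 2 : ℂ) * (JF f1 f2 p : ℂ) * ZD (ZD (fun q => (((JF f1 f2 q)⁻¹ : ℝ) : ℂ))) p

/-- The classical type Schwarzian S_CL(f) = Z³F/ZF − (3/2)(Z²F/ZF)². -/
def SCL (f1 f2 : Heis → ℝ) (p : Heis) : ℂ :=
  ZD (ZD (ZD (CF f1 f2))) p / ZD (CF f1 f2) p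
    - (3 / 2 : ℂ) * (ZD (ZD (CF f1 f2)) p / ZD (CF f1 f2) p) ^ 2

/-- The Preschwarzian Pf = Z(ln J_F). -/
def PS (f1 f2 : Heis → ℝ) (p : Heis) : ℂ := ZD (Cplx (fun q => Real.log (JF f1 f2 q))) p

/-- The map (f₁,f₂,f₃) packaged as a map Heis → Heis. -/
def Fmap (f1 f2 f3 : Heis → ℝ) (p : Heis) : Heis := (f1 p, f2 p, f3 p)

/-!
Conformality and J_F > 0 force Z̄F = 0 and ZF ≠ 0. Put G = F̄ and H = −i f₃. Then ZG = 0, Z̄G is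
the conjugate of ZF, and the contact equations become ZH = G·ZF − F·ZG and Z̄H = G·Z̄F − F·Z̄G.

Since [X, Y] is a constant multiple of the central field T, the relation [Z, [Z, Z̄]] = 0 holds,
that is, Z²Z̄ − 2ZZ̄Z + Z̄Z² = 0. Applied to G it gives Z²(Z̄G) = 0; applied to F, G and H it
gives Z(ZF·(Z̄G)²) = 0. So, as far as Z is concerned, ZF is a constant over the square of a function
with vanishing second derivative, exactly as for the derivative of a Möbius map, and the usual
one-variable computation shows that the Schwarzian vanishes.
-/

section Algebra

open Derivation

lemma lie_lie_smul_add_smul_eq_zero {R L : Type*} [CommRing R] [LieRing L] [LieAlgebra R L]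
    {x y : L} (hx : ⁅x, ⁅x, y⁆⁆ = 0) (hy : ⁅y, ⁅x, y⁆⁆ = 0) (a b c d : R) :
    ⁅a • x + b • y, ⁅a • x + b • y, c • x + d • y⁆⁆ = 0 := by
  have inner_lie : ⁅a • x + b • y, c • x + d • y⁆ = (a * d - b * c) • ⁅x, y⁆ := by
    simp only [lie_add, add_lie, lie_smul, smul_lie, lie_self, ← lie_skew x y]
    module
  rw [inner_lie, lie_smul, add_lie, smul_lie, smul_lie, hx, hy]
  simp only [smul_zero, add_zero]

variable {R A : Type*} [CommRing A]

section CommRing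

variable [CommRing R] [Algebra R A] {Z W : Derivation R A A}

-- Unifying the instances of the general lemma is prohibitively slow when `A` is an algebra of
-- smooth functions; for an abstract `A` it is immediate.
lemma lie_lie_smul_add_smul_eq_zero_of_derivation (hZ : ⁅Z, ⁅Z, W⁆⁆ = 0) (hW : ⁅W, ⁅Z, W⁆⁆ = 0)
    (a b c d : R) : ⁅a • Z + b • W, ⁅a • Z + b • W, c • Z + d • W⁆⁆ = 0 :=
  lie_lie_smul_add_smul_eq_zero hZ hW a b c d

-- `hab` is `Z (a * b ^ 2) = 0` with a factor `b` cancelled.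
lemma schwarzian_numerator_mul_eq_zero {a b : A} (hab : Z a * b + 2 * (a * Z b) = 0)
    (hb : Z (Z b) = 0) : (2 * a * Z (Z a) - 3 * Z a ^ 2) * b = 0 := by
  have hZab : Z (Z a) * b + 3 * (Z a * Z b) = 0 := by
    have h := congrArg Z hab
    simp only [two_mul, map_add, map_zero, leibniz, smul_eq_mul, hb, mul_zero] at h
    linear_combination h
  linear_combination 2 * a * hZab - 3 * Z a * hab

lemma apply_apply_sub_add_eq_zero_of_lie_lie_eq_zero (hZW : ⁅Z, ⁅Z, W⁆⁆ = 0) (a : A) :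
    Z (Z (W a)) - 2 * Z (W (Z a)) + W (Z (Z a)) = 0 := by
  have h := DFunLike.congr_fun hZW a
  simp only [commutator_apply, map_sub, Derivation.zero_apply] at h
  linear_combination h

end CommRing

variable [Field R] [NeZero (2 : R)] [Algebra R A] {Z W : Derivation R A A}

lemma apply_apply_mul_add_two_mul_eq_zero_of_contact (hZW : ⁅Z, ⁅Z, W⁆⁆ = 0) {F G H : A}
    (hWF : W F = 0) (hZG : Z G = 0)
    (hZH : Z H = G * Z F - F * Z G) (hWH : W H = G * W F - F * W G) :
    Z (Z F) * W G + 2 * (Z F * Z (W G)) = 0 := by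
  have hF := apply_apply_sub_add_eq_zero_of_lie_lie_eq_zero hZW F
  have hG := apply_apply_sub_add_eq_zero_of_lie_lie_eq_zero hZW G
  have hH := apply_apply_sub_add_eq_zero_of_lie_lie_eq_zero hZW H
  simp only [hZH, hWH, hWF, hZG, map_zero, mul_zero, sub_zero, zero_sub, map_neg, map_add,
    leibniz, smul_eq_mul, add_zero] at hF hG hH
  refine (smul_eq_zero_iff_right (two_ne_zero (α := R))).mp ?_
  rw [two_smul]
  linear_combination -hH + G * hF - F * hG

lemma schwarzian_numerator_mul_eq_zero_of_contact (hZW : ⁅Z, ⁅Z, W⁆⁆ = 0) {F G H : A}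
    (hWF : W F = 0) (hZG : Z G = 0)
    (hZH : Z H = G * Z F - F * Z G) (hWH : W H = G * W F - F * W G) :
    (2 * Z F * Z (Z (Z F)) - 3 * Z (Z F) ^ 2) * W G = 0 := by
  have hZZWG : Z (Z (W G)) = 0 := by
    simpa [hZG] using apply_apply_sub_add_eq_zero_of_lie_lie_eq_zero hZW G
  exact schwarzian_numerator_mul_eq_zero
    (apply_apply_mul_add_two_mul_eq_zero_of_contact hZW hWF hZG hZH hWH) hZZWG

end Algebra

section SmoothFunctions

open TopologicalSpace VectorField
open scoped ContDiff

variable {E 𝔸 : Type*} [NormedAddCommGroup E] [NormedSpace ℝ E]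
  [NormedCommRing 𝔸] [NormedAlgebra ℝ 𝔸]

lemma differentiableAt_of_contDiffOn {F : Type*} [NormedAddCommGroup F] [NormedSpace ℝ F]
    {Ω : Set E} {u : E → F} (hu : ContDiffOn ℝ ∞ u Ω) (hΩ : IsOpen Ω) {p : E} (hp : p ∈ Ω) :
    DifferentiableAt ℝ u p :=
  (hu.contDiffAt (hΩ.mem_nhds hp)).differentiableAt (by simp)

lemma contDiffOn_fderiv_apply {F : Type*} [NormedAddCommGroup F] [NormedSpace ℝ F] {Ω : Set E}
    (hΩ : IsOpen Ω) {u : E → F} {V : E → E}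
    (hu : ContDiffOn ℝ ∞ u Ω) (hV : ContDiffOn ℝ ∞ V Ω) :
    ContDiffOn ℝ ∞ (fun p => fderiv ℝ u p (V p)) Ω :=
  (hu.fderiv_of_isOpen hΩ (by simp)).clm_apply hV

lemma contDiffOn_lieBracket {Ω : Set E} (hΩ : IsOpen Ω) {V W : E → E}
    (hV : ContDiffOn ℝ ∞ V Ω) (hW : ContDiffOn ℝ ∞ W Ω) :
    ContDiffOn ℝ ∞ (lieBracket ℝ V W) Ω :=
  (contDiffOn_fderiv_apply hΩ hW hV).sub (contDiffOn_fderiv_apply hΩ hV hW)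

/-- The algebra of smooth `𝔸`-valued functions on an open set `Ω`. Its elements are honest functions
on `Ω`, so that equality in the algebra is equality on `Ω`; smoothness is expressed through a
representative on the ambient space. Scalars are taken in `𝔸`, so that complex combinations of real
vector fields act when `𝔸 = ℂ`. -/
def smoothFunctions (Ω : Opens E) (𝔸 : Type*) [NormedCommRing 𝔸] [NormedAlgebra ℝ 𝔸] :
    Subalgebra 𝔸 (Ω → 𝔸) where
  carrier := {u | ∃ U : E → 𝔸, ContDiffOn ℝ ∞ U Ω ∧ ∀ p : Ω, U p = u p}
  mul_mem' := by
    rintro u w ⟨U, hU, hUu⟩ ⟨W, hW, hWw⟩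
    exact ⟨U * W, hU.mul hW, fun p => by simp [hUu, hWw]⟩
  add_mem' := by
    rintro u w ⟨U, hU, hUu⟩ ⟨W, hW, hWw⟩
    exact ⟨U + W, hU.add hW, fun p => by simp [hUu, hWw]⟩
  algebraMap_mem' c := ⟨fun _ => c, contDiffOn_const, fun _ => rfl⟩

namespace smoothFunctions

variable {Ω : Opens E} {U W : E → 𝔸} {V V' : E → E}

/-- The element of `smoothFunctions Ω 𝔸` represented by a function smooth on `Ω`. -/
def restrict (U : E → 𝔸) (hU : ContDiffOn ℝ ∞ U Ω) : smoothFunctions Ω 𝔸 :=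
  ⟨fun p => U p, U, hU, fun _ => rfl⟩

lemma exists_restrict_eq (u : smoothFunctions Ω 𝔸) : ∃ U hU, restrict U hU = u := by
  obtain ⟨u, U, hU, hUu⟩ := u
  exact ⟨U, hU, Subtype.ext (funext hUu)⟩

lemma restrict_add (hU : ContDiffOn ℝ ∞ U Ω) (hW : ContDiffOn ℝ ∞ W Ω) :
    restrict U hU + restrict W hW = restrict (fun p => U p + W p) (hU.add hW) := rfl

lemma restrict_mul (hU : ContDiffOn ℝ ∞ U Ω) (hW : ContDiffOn ℝ ∞ W Ω) :
    restrict U hU * restrict W hW = restrict (fun p => U p * W p) (hU.mul hW) := rfl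

lemma smul_restrict (c : 𝔸) (hU : ContDiffOn ℝ ∞ U Ω) :
    c • restrict U hU = restrict (fun p => c * U p) (contDiffOn_const.mul hU) := rfl

lemma restrict_eq_restrict_iff {hU : ContDiffOn ℝ ∞ U Ω} {hW : ContDiffOn ℝ ∞ W Ω} :
    restrict U hU = restrict W hW ↔ ∀ p ∈ Ω, U p = W p :=
  ⟨fun h p hp => congrFun (congrArg Subtype.val h) ⟨p, hp⟩,
    fun h => Subtype.ext (funext fun p => h p p.2)⟩

lemma fderiv_extend (U : E → 𝔸) (p : Ω) :
    fderiv ℝ (Function.extend Subtype.val (fun q : Ω => U q) 0) p = fderiv ℝ U p := by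
  refine Filter.EventuallyEq.fderiv_eq ?_
  filter_upwards [Ω.isOpen.mem_nhds p.2] with q hq
  exact Subtype.val_injective.extend_apply _ _ (⟨q, hq⟩ : Ω)

/-- The derivative `V u` of a smooth function on `Ω` along a vector field. It is computed on the
extension of `u` by zero, which near each point of the open set `Ω` agrees with any representative
of `u`. -/
def directionalDeriv (V : E → E) (hV : ContDiffOn ℝ ∞ V Ω) (u : smoothFunctions Ω 𝔸) :
    smoothFunctions Ω 𝔸 :=
  ⟨fun p => fderiv ℝ (Function.extend Subtype.val u.1 0) p (V p), by
    obtain ⟨U, hU, rfl⟩ := exists_restrict_eq u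
    exact ⟨_, contDiffOn_fderiv_apply Ω.isOpen hU hV,
      fun p => (DFunLike.congr_fun (fderiv_extend U p) (V p)).symm⟩⟩

lemma directionalDeriv_restrict (hV : ContDiffOn ℝ ∞ V Ω) (hU : ContDiffOn ℝ ∞ U Ω) :
    directionalDeriv V hV (restrict U hU) =
      restrict (fun p => fderiv ℝ U p (V p)) (contDiffOn_fderiv_apply Ω.isOpen hU hV) :=
  Subtype.ext (funext fun p => DFunLike.congr_fun (fderiv_extend U p) (V p))

variable (𝔸) in
/-- A smooth vector field on `Ω`, regarded as a derivation of the algebra of smooth functions. -/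
def derivation (V : E → E) (hV : ContDiffOn ℝ ∞ V Ω) :
    Derivation 𝔸 (smoothFunctions Ω 𝔸) (smoothFunctions Ω 𝔸) :=
  have differentiableAt {U : E → 𝔸} (hU : ContDiffOn ℝ ∞ U Ω) {p : E} (hp : p ∈ Ω) :
      DifferentiableAt ℝ U p := differentiableAt_of_contDiffOn hU Ω.isOpen hp
  .mk'
    { toFun := directionalDeriv V hV
      map_add' u w := by
        obtain ⟨U, hU, rfl⟩ := exists_restrict_eq u
        obtain ⟨W, hW, rfl⟩ := exists_restrict_eq w
        simp only [restrict_add, directionalDeriv_restrict, restrict_eq_restrict_iff]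
        intro p hp
        rw [fderiv_fun_add (differentiableAt hU hp) (differentiableAt hW hp), add_apply]
      map_smul' c u := by
        obtain ⟨U, hU, rfl⟩ := exists_restrict_eq u
        simp only [smul_restrict, directionalDeriv_restrict, restrict_eq_restrict_iff,
          RingHom.id_apply]
        intro p hp
        rw [fderiv_const_mul (differentiableAt hU hp), smul_apply, smul_eq_mul] }
    fun u w => by
      obtain ⟨U, hU, rfl⟩ := exists_restrict_eq u
      obtain ⟨W, hW, rfl⟩ := exists_restrict_eq w
      simp only [smul_eq_mul, restrict_mul, restrict_add, LinearMap.coe_mk, AddHom.coe_mk,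
        directionalDeriv_restrict, restrict_eq_restrict_iff]
      intro p hp
      simp only [fderiv_fun_mul (differentiableAt hU hp) (differentiableAt hW hp), add_apply,
        smul_apply, smul_eq_mul]

lemma derivation_restrict (hV : ContDiffOn ℝ ∞ V Ω) (hU : ContDiffOn ℝ ∞ U Ω) :
    derivation 𝔸 V hV (restrict U hU) =
      restrict (fun p => fderiv ℝ U p (V p)) (contDiffOn_fderiv_apply Ω.isOpen hU hV) :=
  directionalDeriv_restrict hV hU

lemma lie_derivation (hV : ContDiffOn ℝ ∞ V Ω) (hV' : ContDiffOn ℝ ∞ V' Ω) :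
    ⁅derivation 𝔸 V hV, derivation 𝔸 V' hV'⁆ =
      derivation 𝔸 (lieBracket ℝ V V') (contDiffOn_lieBracket Ω.isOpen hV hV') := by
  ext1 u
  obtain ⟨U, hU, rfl⟩ := exists_restrict_eq u
  rw [Derivation.commutator_apply, sub_eq_iff_eq_add]
  simp only [derivation_restrict, restrict_add, restrict_eq_restrict_iff]
  intro p hp
  rw [fderiv_apply_lieBracket (hU.contDiffAt (Ω.isOpen.mem_nhds hp))
    (by simpa using WithTop.coe_le_coe.2 (le_top (a := (2 : ℕ∞))))
    (differentiableAt_of_contDiffOn hV' Ω.isOpen hp)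
    (differentiableAt_of_contDiffOn hV Ω.isOpen hp), sub_add_cancel]

lemma lie_lie_derivation_eq_zero {V₁ V₂ V₃ : E → E} (h₁ : ContDiffOn ℝ ∞ V₁ Ω)
    (h₂ : ContDiffOn ℝ ∞ V₂ Ω) (h₃ : ContDiffOn ℝ ∞ V₃ Ω)
    (h : lieBracket ℝ V₁ (lieBracket ℝ V₂ V₃) = 0) :
    ⁅derivation 𝔸 V₁ h₁, ⁅derivation 𝔸 V₂ h₂, derivation 𝔸 V₃ h₃⁆⁆ = 0 := by
  ext1 u
  obtain ⟨U, hU, rfl⟩ := exists_restrict_eq u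
  simp only [lie_derivation, h, derivation_restrict, Pi.zero_apply, map_zero]
  rfl

end smoothFunctions

end SmoothFunctions

section Heisenberg

open TopologicalSpace VectorField smoothFunctions
open scoped ContDiff ComplexConjugate

/-- The coefficients of the vector field X, so that `XD u p = fderiv ℝ u p (heisX p)`. -/
def heisX (p : Heis) : Heis := (1, 0, 2 * p.2.1)

/-- The coefficients of the vector field Y, so that `YD u p = fderiv ℝ u p (heisY p)`. -/
def heisY (p : Heis) : Heis := (0, 1, -(2 * p.1))

lemma contDiff_heisX : ContDiff ℝ ∞ heisX := by unfold heisX; fun_prop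

lemma contDiff_heisY : ContDiff ℝ ∞ heisY := by unfold heisY; fun_prop

lemma fderiv_heisX_apply (p v : Heis) : fderiv ℝ heisX p v = (0, 0, 2 * v.2.1) := by
  have hy : HasFDerivAt (fun q : Heis => q.2.1) _ p := (hasFDerivAt_snd (𝕜 := ℝ)).fst
  have h : HasFDerivAt heisX _ p :=
    (hasFDerivAt_const 1 p).prodMk ((hasFDerivAt_const 0 p).prodMk (hy.const_mul 2))
  simp [h.fderiv]

lemma fderiv_heisY_apply (p v : Heis) : fderiv ℝ heisY p v = (0, 0, -(2 * v.1)) := by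
  have hx : HasFDerivAt (fun q : Heis => q.1) _ p := hasFDerivAt_fst (𝕜 := ℝ)
  have h : HasFDerivAt heisY _ p :=
    (hasFDerivAt_const 0 p).prodMk ((hasFDerivAt_const 1 p).prodMk (hx.const_mul 2).fun_neg)
  simp [h.fderiv]

lemma lieBracket_heisX_heisY : lieBracket ℝ heisX heisY = fun _ => (0, 0, -4) := by
  funext p
  rw [lieBracket, fderiv_heisX_apply, fderiv_heisY_apply]
  norm_num [heisX, heisY]

lemma lieBracket_heisX_vertical (s : ℝ) : lieBracket ℝ heisX (fun _ => (0, 0, s)) = 0 := by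
  funext p
  simp [lieBracket, fderiv_heisX_apply]

lemma lieBracket_heisY_vertical (s : ℝ) : lieBracket ℝ heisY (fun _ => (0, 0, s)) = 0 := by
  funext p
  simp [lieBracket, fderiv_heisY_apply]

variable {Ω : Opens Heis} {u : Heis → ℂ}

variable (Ω) in
/-- X as a derivation of the smooth complex functions on `Ω`. -/
def derivX : Derivation ℂ (smoothFunctions Ω ℂ) (smoothFunctions Ω ℂ) :=
  derivation ℂ heisX contDiff_heisX.contDiffOn

variable (Ω) in
/-- Y as a derivation of the smooth complex functions on `Ω`. -/
def derivY : Derivation ℂ (smoothFunctions Ω ℂ) (smoothFunctions Ω ℂ) :=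
  derivation ℂ heisY contDiff_heisY.contDiffOn

variable (Ω) in
/-- Z = (X − iY)/2 as a derivation of the smooth complex functions on `Ω`; see `derivZ_restrict` for
the comparison with `ZD`. -/
def derivZ : Derivation ℂ (smoothFunctions Ω ℂ) (smoothFunctions Ω ℂ) :=
  (1 / 2 : ℂ) • derivX Ω + (-I / 2) • derivY Ω

variable (Ω) in
/-- Z̄ = (X + iY)/2 as a derivation of the smooth complex functions on `Ω`; see `derivZbar_restrict`
for the comparison with `ZbD`. -/
def derivZbar : Derivation ℂ (smoothFunctions Ω ℂ) (smoothFunctions Ω ℂ) :=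
  (1 / 2 : ℂ) • derivX Ω + (I / 2) • derivY Ω

lemma lie_derivZ_lie_derivZ_derivZbar : ⁅derivZ Ω, ⁅derivZ Ω, derivZbar Ω⁆⁆ = 0 := by
  have hX : ⁅derivX Ω, ⁅derivX Ω, derivY Ω⁆⁆ = 0 :=
    lie_lie_derivation_eq_zero _ _ _ (by rw [lieBracket_heisX_heisY, lieBracket_heisX_vertical])
  have hY : ⁅derivY Ω, ⁅derivX Ω, derivY Ω⁆⁆ = 0 :=
    lie_lie_derivation_eq_zero _ _ _ (by rw [lieBracket_heisX_heisY, lieBracket_heisY_vertical])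
  exact lie_lie_smul_add_smul_eq_zero_of_derivation hX hY _ _ _ _

lemma contDiffOn_ZD (hu : ContDiffOn ℝ ∞ u Ω) : ContDiffOn ℝ ∞ (ZD u) Ω :=
  ((contDiffOn_fderiv_apply Ω.isOpen hu contDiff_heisX.contDiffOn).sub
    (contDiffOn_const.mul
      (contDiffOn_fderiv_apply Ω.isOpen hu contDiff_heisY.contDiffOn))).div_const 2

lemma contDiffOn_ZbD (hu : ContDiffOn ℝ ∞ u Ω) : ContDiffOn ℝ ∞ (ZbD u) Ω :=
  ((contDiffOn_fderiv_apply Ω.isOpen hu contDiff_heisX.contDiffOn).add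
    (contDiffOn_const.mul
      (contDiffOn_fderiv_apply Ω.isOpen hu contDiff_heisY.contDiffOn))).div_const 2

lemma derivZ_restrict (hu : ContDiffOn ℝ ∞ u Ω) :
    derivZ Ω (restrict u hu) = restrict (ZD u) (contDiffOn_ZD hu) := by
  simp only [derivZ, derivX, derivY, Derivation.add_apply, Derivation.smul_apply,
    derivation_restrict, smul_restrict, restrict_add, restrict_eq_restrict_iff]
  intro p _
  change _ = (fderiv ℝ u p (heisX p) - I * fderiv ℝ u p (heisY p)) / 2
  ring

lemma derivZbar_restrict (hu : ContDiffOn ℝ ∞ u Ω) :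
    derivZbar Ω (restrict u hu) = restrict (ZbD u) (contDiffOn_ZbD hu) := by
  simp only [derivZbar, derivX, derivY, Derivation.add_apply, Derivation.smul_apply,
    derivation_restrict, smul_restrict, restrict_add, restrict_eq_restrict_iff]
  intro p _
  change _ = (fderiv ℝ u p (heisX p) + I * fderiv ℝ u p (heisY p)) / 2
  ring

theorem schwarzian_numerator_mul_ZbD_eq_zero {F G H : Heis → ℂ} (hF : ContDiffOn ℝ ∞ F Ω)
    (hG : ContDiffOn ℝ ∞ G Ω) (hH : ContDiffOn ℝ ∞ H Ω)
    (hZbF : ∀ p ∈ Ω, ZbD F p = 0) (hZG : ∀ p ∈ Ω, ZD G p = 0)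
    (hZH : ∀ p ∈ Ω, ZD H p = G p * ZD F p - F p * ZD G p)
    (hZbH : ∀ p ∈ Ω, ZbD H p = G p * ZbD F p - F p * ZbD G p) {p : Heis} (hp : p ∈ Ω) :
    (2 * ZD F p * ZD (ZD (ZD F)) p - 3 * ZD (ZD F) p ^ 2) * ZbD G p = 0 := by
  have key := schwarzian_numerator_mul_eq_zero_of_contact (F := restrict F hF) (G := restrict G hG)
    (H := restrict H hH) (lie_derivZ_lie_derivZ_derivZbar (Ω := Ω))
    (by rw [derivZbar_restrict]; exact Subtype.ext (funext fun p => hZbF p p.2))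
    (by rw [derivZ_restrict]; exact Subtype.ext (funext fun p => hZG p p.2))
    (by simp only [derivZ_restrict]; exact Subtype.ext (funext fun p => hZH p p.2))
    (by simp only [derivZbar_restrict]; exact Subtype.ext (funext fun p => hZbH p p.2))
  simp only [derivZ_restrict, derivZbar_restrict] at key
  exact congrFun (congrArg Subtype.val key) ⟨p, hp⟩

section CF

variable {g₁ g₂ : Heis → ℝ} {p : Heis}

lemma contDiffOn_CF {s : Set Heis} (h₁ : ContDiffOn ℝ ∞ g₁ s) (h₂ : ContDiffOn ℝ ∞ g₂ s) :
    ContDiffOn ℝ ∞ (CF g₁ g₂) s :=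
  (ofRealCLM.contDiff.comp_contDiffOn h₁).add
    ((ofRealCLM.contDiff.comp_contDiffOn h₂).mul contDiffOn_const)

lemma fderiv_CF_apply (h₁ : DifferentiableAt ℝ g₁ p) (h₂ : DifferentiableAt ℝ g₂ p) (v : Heis) :
    fderiv ℝ (CF g₁ g₂) p v = fderiv ℝ g₁ p v + fderiv ℝ g₂ p v * I := by
  have h : HasFDerivAt (CF g₁ g₂) _ p :=
    (ofRealCLM.hasFDerivAt.comp p h₁.hasFDerivAt).add
      ((ofRealCLM.hasFDerivAt.comp p h₂.hasFDerivAt).mul_const I)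
  simp [h.fderiv, mul_comm]

lemma ZD_CF (h₁ : DifferentiableAt ℝ g₁ p) (h₂ : DifferentiableAt ℝ g₂ p) :
    ZD (CF g₁ g₂) p = ⟨(XD g₁ p + YD g₂ p) / 2, (XD g₂ p - YD g₁ p) / 2⟩ := by
  rw [ZD, XD, YD, fderiv_CF_apply h₁ h₂, fderiv_CF_apply h₁ h₂, ← XD, ← XD, ← YD, ← YD]
  apply Complex.ext <;> simp

lemma ZbD_CF (h₁ : DifferentiableAt ℝ g₁ p) (h₂ : DifferentiableAt ℝ g₂ p) :
    ZbD (CF g₁ g₂) p = ⟨(XD g₁ p - YD g₂ p) / 2, (XD g₂ p + YD g₁ p) / 2⟩ := by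
  rw [ZbD, XD, YD, fderiv_CF_apply h₁ h₂, fderiv_CF_apply h₁ h₂, ← XD, ← XD, ← YD, ← YD]
  apply Complex.ext <;> simp [sub_eq_add_neg]

lemma XD_neg (g : Heis → ℝ) (p : Heis) : XD (-g) p = -XD g p := by simp [XD, fderiv_neg]

lemma YD_neg (g : Heis → ℝ) (p : Heis) : YD (-g) p = -YD g p := by simp [YD, fderiv_neg]

lemma ZD_CF_neg (h₁ : DifferentiableAt ℝ g₁ p) (h₂ : DifferentiableAt ℝ g₂ p) :
    ZD (CF g₁ (-g₂)) p = conj (ZbD (CF g₁ g₂) p) := by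
  rw [ZD_CF h₁ h₂.neg, ZbD_CF h₁ h₂, XD_neg, YD_neg]
  apply Complex.ext
  · rw [conj_re]; ring
  · rw [conj_im]; ring

lemma ZbD_CF_neg (h₁ : DifferentiableAt ℝ g₁ p) (h₂ : DifferentiableAt ℝ g₂ p) :
    ZbD (CF g₁ (-g₂)) p = conj (ZD (CF g₁ g₂) p) := by
  rw [ZbD_CF h₁ h₂.neg, ZD_CF h₁ h₂, XD_neg, YD_neg]
  apply Complex.ext
  · rw [conj_re]; ring
  · rw [conj_im]; ring

lemma JF_eq_normSq_sub_normSq (h₁ : DifferentiableAt ℝ g₁ p) (h₂ : DifferentiableAt ℝ g₂ p) :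
    JF g₁ g₂ p = normSq (ZD (CF g₁ g₂) p) - normSq (ZbD (CF g₁ g₂) p) := by
  rw [ZD_CF h₁ h₂, ZbD_CF h₁ h₂, normSq_mk, normSq_mk, JF]
  ring

lemma ZD_CF_ne_zero_of_JF_pos (h₁ : DifferentiableAt ℝ g₁ p) (h₂ : DifferentiableAt ℝ g₂ p)
    (hJ : 0 < JF g₁ g₂ p) : ZD (CF g₁ g₂) p ≠ 0 := by
  rw [JF_eq_normSq_sub_normSq h₁ h₂, sub_pos] at hJ
  exact normSq_pos.mp ((normSq_nonneg _).trans_lt hJ)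

lemma ZD_mul_conj_ZbD_eq_zero (h₁ : DifferentiableAt ℝ g₁ p) (h₂ : DifferentiableAt ℝ g₂ p)
    (hnorm : XD g₁ p ^ 2 + XD g₂ p ^ 2 = YD g₁ p ^ 2 + YD g₂ p ^ 2)
    (horth : XD g₁ p * YD g₁ p + XD g₂ p * YD g₂ p = 0) :
    ZD (CF g₁ g₂) p * conj (ZbD (CF g₁ g₂) p) = 0 := by
  rw [ZD_CF h₁ h₂, ZbD_CF h₁ h₂]
  apply Complex.ext
  · rw [mul_re, conj_re, conj_im, zero_re]
    linear_combination hnorm / 4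
  · rw [mul_im, conj_re, conj_im, zero_im]
    linear_combination -horth / 2

lemma ZbD_CF_eq_zero_of_JF_pos (h₁ : DifferentiableAt ℝ g₁ p) (h₂ : DifferentiableAt ℝ g₂ p)
    (hJ : 0 < JF g₁ g₂ p)
    (hnorm : XD g₁ p ^ 2 + XD g₂ p ^ 2 = YD g₁ p ^ 2 + YD g₂ p ^ 2)
    (horth : XD g₁ p * YD g₁ p + XD g₂ p * YD g₂ p = 0) : ZbD (CF g₁ g₂) p = 0 :=
  (map_eq_zero (starRingEnd ℂ)).mp <|
    (mul_eq_zero.mp (ZD_mul_conj_ZbD_eq_zero h₁ h₂ hnorm horth)).resolve_left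
      (ZD_CF_ne_zero_of_JF_pos h₁ h₂ hJ)

lemma XD_zero (p : Heis) : XD (0 : Heis → ℝ) p = 0 := by simp [XD]

lemma YD_zero (p : Heis) : YD (0 : Heis → ℝ) p = 0 := by simp [YD]

lemma CF_apply (g₁ g₂ : Heis → ℝ) (p : Heis) : CF g₁ g₂ p = ⟨g₁ p, g₂ p⟩ :=
  (mk_eq_add_mul_I _ _).symm

variable {g₃ : Heis → ℝ}

-- `CF 0 (-g₃)` is `-i g₃`, and the contact equations say that, along X and Y,
-- `d(-i g₃) = F̄ dF - F dF̄` with `F = g₁ + i g₂`.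
lemma ZD_CF_zero_neg_of_contact (h₁ : DifferentiableAt ℝ g₁ p) (h₂ : DifferentiableAt ℝ g₂ p)
    (h₃ : DifferentiableAt ℝ g₃ p)
    (hX : XD g₃ p - 2 * g₂ p * XD g₁ p + 2 * g₁ p * XD g₂ p = 0)
    (hY : YD g₃ p - 2 * g₂ p * YD g₁ p + 2 * g₁ p * YD g₂ p = 0) :
    ZD (CF 0 (-g₃)) p = CF g₁ (-g₂) p * ZD (CF g₁ g₂) p - CF g₁ g₂ p * ZD (CF g₁ (-g₂)) p := by
  rw [ZD_CF (g₁ := 0) (differentiableAt_const 0) h₃.neg, ZD_CF h₁ h₂, ZD_CF h₁ h₂.neg,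
    XD_zero, YD_zero, XD_neg, XD_neg, YD_neg, YD_neg, CF_apply, CF_apply, Pi.neg_apply]
  apply Complex.ext
  · simp only [sub_re, mul_re]
    linear_combination -hY / 2
  · simp only [sub_im, mul_im]
    linear_combination -hX / 2

lemma ZbD_CF_zero_neg_of_contact (h₁ : DifferentiableAt ℝ g₁ p) (h₂ : DifferentiableAt ℝ g₂ p)
    (h₃ : DifferentiableAt ℝ g₃ p)
    (hX : XD g₃ p - 2 * g₂ p * XD g₁ p + 2 * g₁ p * XD g₂ p = 0)
    (hY : YD g₃ p - 2 * g₂ p * YD g₁ p + 2 * g₁ p * YD g₂ p = 0) :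
    ZbD (CF 0 (-g₃)) p = CF g₁ (-g₂) p * ZbD (CF g₁ g₂) p - CF g₁ g₂ p * ZbD (CF g₁ (-g₂)) p := by
  rw [ZbD_CF (g₁ := 0) (differentiableAt_const 0) h₃.neg, ZbD_CF h₁ h₂, ZbD_CF h₁ h₂.neg,
    XD_zero, YD_zero, XD_neg, XD_neg, YD_neg, YD_neg, CF_apply, CF_apply, Pi.neg_apply]
  apply Complex.ext
  · simp only [sub_re, mul_re]
    linear_combination hY / 2
  · simp only [sub_im, mul_im]
    linear_combination -hX / 2

lemma SCL_eq_div (h : ZD (CF g₁ g₂) p ≠ 0) :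
    SCL g₁ g₂ p = (2 * ZD (CF g₁ g₂) p * ZD (ZD (ZD (CF g₁ g₂))) p
      - 3 * ZD (ZD (CF g₁ g₂)) p ^ 2) / (2 * ZD (CF g₁ g₂) p ^ 2) := by
  rw [SCL]
  field_simp

end CF

end Heisenberg

/-- for a smooth conformal map f on Ω, ZF ≠ 0 on Ω and the classical type
Schwarzian vanishes: S_CL(f) = 0 on Ω. -/
theorem stmt_7 (Ω : Set Heis) (hΩ : IsOpen Ω) (f1 f2 f3 : Heis → ℝ)
    (hconf : ConformalOn f1 f2 f3 Ω) :
    (∀ p ∈ Ω, ZD (CF f1 f2) p ≠ 0) ∧ (∀ p ∈ Ω, SCL f1 f2 p = 0) := by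
  obtain ⟨h1, h2, h3, hcontact, hJ, hCR⟩ := hconf
  have d1 {p} (hp : p ∈ Ω) := differentiableAt_of_contDiffOn h1 hΩ hp
  have d2 {p} (hp : p ∈ Ω) := differentiableAt_of_contDiffOn h2 hΩ hp
  have d3 {p} (hp : p ∈ Ω) := differentiableAt_of_contDiffOn h3 hΩ hp
  have hZF : ∀ p ∈ Ω, ZD (CF f1 f2) p ≠ 0 := fun p hp =>
    ZD_CF_ne_zero_of_JF_pos (d1 hp) (d2 hp) (hJ p hp)
  have hZbF : ∀ p ∈ Ω, ZbD (CF f1 f2) p = 0 := fun p hp =>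
    ZbD_CF_eq_zero_of_JF_pos (d1 hp) (d2 hp) (hJ p hp) (hCR p hp).1 (hCR p hp).2
  have hZG : ∀ p ∈ Ω, ZD (CF f1 (-f2)) p = 0 := fun p hp => by
    rw [ZD_CF_neg (d1 hp) (d2 hp), hZbF p hp, map_zero]
  refine ⟨hZF, fun p hp => ?_⟩
  have key := schwarzian_numerator_mul_ZbD_eq_zero (Ω := ⟨Ω, hΩ⟩) (contDiffOn_CF h1 h2)
    (G := CF f1 (-f2)) (contDiffOn_CF h1 h2.neg)
    (H := CF 0 (-f3)) (contDiffOn_CF contDiffOn_const h3.neg) hZbF hZG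
    (fun q hq => ZD_CF_zero_neg_of_contact (d1 hq) (d2 hq) (d3 hq) (hcontact q hq).1
      (hcontact q hq).2)
    (fun q hq => ZbD_CF_zero_neg_of_contact (d1 hq) (d2 hq) (d3 hq) (hcontact q hq).1
      (hcontact q hq).2) hp
  rw [ZbD_CF_neg (d1 hp) (d2 hp), mul_eq_zero_iff_right ((map_ne_zero _).mpr (hZF p hp))] at key
  rw [SCL_eq_div (hZF p hp), key, zero_div]
end
end

section
/- Let Ω ⊆ ℝ³ be a connected open set and let f, g : Ω → ℝ³ be smooth maps with J_F > 0 and J_G > 0 on Ω. If Pf = Pg on Ω, then there exists a constant c > 0 such that J_F = c·J_G on Ω. -/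
noncomputable section

open Complex

/-! Since `log J_F` is real, `Z (log J_F)` determines both `X (log J_F)` and `Y (log J_F)`. The
commutator relation `[X, Y] = -4T` recovers the missing derivative `T (log J_F)`, and `X`, `Y`, `T`
span the tangent space at every point. Hence the Preschwarzian determines the differential of
`log J_F`, and on a connected open set it determines `log J_F` up to an additive constant. -/

section HeisenbergFrame

variable {E : Type*} [NormedAddCommGroup E] [NormedSpace ℝ E]

/-- The left-invariant vector field `X` as a map on `ℝ³`, so that `XD u p` is by definition
`fderiv ℝ u p (fieldX p)`; this makes it available to Mathlib's Lie bracket. -/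
def fieldX (p : Heis) : Heis := (1, 0, 2 * p.2.1)

/-- The left-invariant vector field `Y` as a map on `ℝ³`, so that `YD u p` is by definition
`fderiv ℝ u p (fieldY p)`; this makes it available to Mathlib's Lie bracket. -/
def fieldY (p : Heis) : Heis := (0, 1, -(2 * p.1))

theorem contDiff_fieldX {n : WithTop ℕ∞} : ContDiff ℝ n fieldX := by
  unfold fieldX
  fun_prop

theorem contDiff_fieldY {n : WithTop ℕ∞} : ContDiff ℝ n fieldY := by
  unfold fieldY
  fun_prop

theorem fderiv_fieldX_apply (p v : Heis) : fderiv ℝ fieldX p v = (0, 0, 2 * v.2.1) := by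
  have h : HasFDerivAt (𝕜 := ℝ) fieldX _ p :=
    .prodMk (hasFDerivAt_const _ _) (.prodMk (hasFDerivAt_const _ _)
      (.const_mul (.fst hasFDerivAt_snd) 2))
  simp [h.fderiv]

theorem fderiv_fieldY_apply (p v : Heis) : fderiv ℝ fieldY p v = (0, 0, -(2 * v.1)) := by
  have h : HasFDerivAt (𝕜 := ℝ) fieldY _ p :=
    .prodMk (hasFDerivAt_const _ _) (.prodMk (hasFDerivAt_const _ _)
      (.neg (.const_mul hasFDerivAt_fst 2)))
  simp [h.fderiv]

theorem lieBracket_fieldX_fieldY (p : Heis) :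
    VectorField.lieBracket ℝ fieldX fieldY p = (-4 : ℝ) • ((0, 0, 1) : Heis) := by
  rw [VectorField.lieBracket, fderiv_fieldX_apply, fderiv_fieldY_apply]
  ext <;> norm_num [fieldX, fieldY]

theorem XD_YD_sub_YD_XD {u : Heis → E} {p : Heis} (hu : ContDiffAt ℝ 2 u p) :
    XD (YD u) p - YD (XD u) p = (-4 : ℝ) • TD u p := by
  have h := VectorField.fderiv_apply_lieBracket hu (by simp)
    (contDiff_fieldY.differentiable one_ne_zero p) (contDiff_fieldX.differentiable one_ne_zero p)
  rw [lieBracket_fieldX_fieldY, map_smul] at h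
  exact h.symm

theorem fderiv_apply_eq_XD_add_YD_add_TD (u : Heis → E) (p v : Heis) :
    fderiv ℝ u p v = v.1 • XD u p + v.2.1 • YD u p +
      (v.2.2 - 2 * v.1 * p.2.1 + 2 * v.2.1 * p.1) • TD u p := by
  have v_eq : v = v.1 • fieldX p + v.2.1 • fieldY p +
      (v.2.2 - 2 * v.1 * p.2.1 + 2 * v.2.1 * p.1) • ((0, 0, 1) : Heis) := by
    ext <;> simp [fieldX, fieldY]
    ring
  refine (congrArg (fderiv ℝ u p) v_eq).trans ?_
  simp only [map_add, map_smul]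
  rfl

theorem TD_eqOn_of_XD_eqOn_of_YD_eqOn {Ω : Set Heis} (hΩ : IsOpen Ω) {u v : Heis → E}
    (hu : ContDiffOn ℝ 2 u Ω) (hv : ContDiffOn ℝ 2 v Ω)
    (hX : Set.EqOn (XD u) (XD v) Ω) (hY : Set.EqOn (YD u) (YD v) Ω) :
    Set.EqOn (TD u) (TD v) Ω := by
  intro p hp
  have hΩp := hΩ.mem_nhds hp
  have hXY : XD (YD u) p = XD (YD v) p := by
    rw [XD, XD, (Filter.eventuallyEq_of_mem hΩp hY).fderiv_eq]
  have hYX : YD (XD u) p = YD (XD v) p := by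
    rw [YD, YD, (Filter.eventuallyEq_of_mem hΩp hX).fderiv_eq]
  have hT : (-4 : ℝ) • TD u p = (-4 : ℝ) • TD v p := by
    rw [← XD_YD_sub_YD_XD (hu.contDiffAt hΩp), ← XD_YD_sub_YD_XD (hv.contDiffAt hΩp), hXY, hYX]
  exact smul_right_injective E (by norm_num) hT

theorem fderiv_eqOn_of_XD_eqOn_of_YD_eqOn {Ω : Set Heis} (hΩ : IsOpen Ω) {u v : Heis → E}
    (hu : ContDiffOn ℝ 2 u Ω) (hv : ContDiffOn ℝ 2 v Ω)
    (hX : Set.EqOn (XD u) (XD v) Ω) (hY : Set.EqOn (YD u) (YD v) Ω) :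
    Set.EqOn (fderiv ℝ u) (fderiv ℝ v) Ω := by
  intro p hp
  refine ContinuousLinearMap.ext fun w => ?_
  rw [fderiv_apply_eq_XD_add_YD_add_TD, fderiv_apply_eq_XD_add_YD_add_TD, hX hp, hY hp,
    TD_eqOn_of_XD_eqOn_of_YD_eqOn hΩ hu hv hX hY hp]

theorem contDiffOn_XD {Ω : Set Heis} (hΩ : IsOpen Ω) {u : Heis → E} {m n : WithTop ℕ∞}
    (hu : ContDiffOn ℝ n u Ω) (hmn : m + 1 ≤ n) : ContDiffOn ℝ m (XD u) Ω :=
  (hu.fderiv_of_isOpen hΩ hmn).clm_apply contDiff_fieldX.contDiffOn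

theorem contDiffOn_YD {Ω : Set Heis} (hΩ : IsOpen Ω) {u : Heis → E} {m n : WithTop ℕ∞}
    (hu : ContDiffOn ℝ n u Ω) (hmn : m + 1 ≤ n) : ContDiffOn ℝ m (YD u) Ω :=
  (hu.fderiv_of_isOpen hΩ hmn).clm_apply contDiff_fieldY.contDiffOn

end HeisenbergFrame

section RealValued

variable {Ω : Set Heis} {u v : Heis → ℝ} {p : Heis}

theorem ZD_Cplx (hu : DifferentiableAt ℝ u p) :
    ZD (Cplx u) p = (((XD u p : ℝ) : ℂ) - I * ((YD u p : ℝ) : ℂ)) / 2 := by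
  have h : HasFDerivAt (Cplx u) (ofRealCLM.comp (fderiv ℝ u p)) p :=
    ofRealCLM.hasFDerivAt.comp p hu.hasFDerivAt
  simp [ZD, XD, YD, h.fderiv]

theorem ZD_Cplx_eq_iff (hu : DifferentiableAt ℝ u p) (hv : DifferentiableAt ℝ v p) :
    ZD (Cplx u) p = ZD (Cplx v) p ↔ XD u p = XD v p ∧ YD u p = YD v p := by
  rw [ZD_Cplx hu, ZD_Cplx hv, Complex.ext_iff]
  simp

theorem exists_eqOn_add_const_of_ZD_Cplx_eqOn (hΩ : IsOpen Ω) (hconn : IsPreconnected Ω)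
    (hu : ContDiffOn ℝ 2 u Ω) (hv : ContDiffOn ℝ 2 v Ω)
    (hZ : Set.EqOn (ZD (Cplx u)) (ZD (Cplx v)) Ω) : ∃ a, Set.EqOn u (v · + a) Ω := by
  have hdu := hu.differentiableOn two_ne_zero
  have hdv := hv.differentiableOn two_ne_zero
  have hXY : ∀ p ∈ Ω, XD u p = XD v p ∧ YD u p = YD v p := fun p hp =>
    (ZD_Cplx_eq_iff (hdu.differentiableAt (hΩ.mem_nhds hp))
      (hdv.differentiableAt (hΩ.mem_nhds hp))).1 (hZ hp)
  exact hΩ.exists_eq_add_of_fderiv_eq hconn hdu hdv <|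
    fderiv_eqOn_of_XD_eqOn_of_YD_eqOn hΩ hu hv (fun p hp => (hXY p hp).1)
      fun p hp => (hXY p hp).2

theorem exists_eq_const_mul_of_ZD_Cplx_log_eqOn (hΩ : IsOpen Ω) (hconn : IsPreconnected Ω)
    (hu : ContDiffOn ℝ 2 u Ω) (hv : ContDiffOn ℝ 2 v Ω)
    (hu_pos : ∀ p ∈ Ω, 0 < u p) (hv_pos : ∀ p ∈ Ω, 0 < v p)
    (hZ : Set.EqOn (ZD (Cplx fun q => Real.log (u q))) (ZD (Cplx fun q => Real.log (v q))) Ω) :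
    ∃ c : ℝ, 0 < c ∧ ∀ p ∈ Ω, u p = c * v p := by
  obtain ⟨a, ha⟩ := exists_eqOn_add_const_of_ZD_Cplx_eqOn hΩ hconn
    (hu.log fun p hp => (hu_pos p hp).ne') (hv.log fun p hp => (hv_pos p hp).ne') hZ
  refine ⟨Real.exp a, Real.exp_pos a, fun p hp => ?_⟩
  calc u p = Real.exp (Real.log (u p)) := (Real.exp_log (hu_pos p hp)).symm
    _ = Real.exp (Real.log (v p) + a) := congrArg Real.exp (ha hp)
    _ = Real.exp a * v p := by rw [Real.exp_add, Real.exp_log (hv_pos p hp), mul_comm]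

theorem contDiffOn_JF (hΩ : IsOpen Ω) {m n : WithTop ℕ∞} (hu : ContDiffOn ℝ n u Ω)
    (hv : ContDiffOn ℝ n v Ω) (hmn : m + 1 ≤ n) : ContDiffOn ℝ m (JF u v) Ω :=
  ((contDiffOn_XD hΩ hu hmn).mul (contDiffOn_YD hΩ hv hmn)).sub
    ((contDiffOn_YD hΩ hu hmn).mul (contDiffOn_XD hΩ hv hmn))

end RealValued

theorem stmt_12_general {Ω : Set Heis} (hΩ : IsOpen Ω) (hconn : IsPreconnected Ω)
    {f1 f2 g1 g2 : Heis → ℝ}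
    (hf1 : ContDiffOn ℝ 3 f1 Ω) (hf2 : ContDiffOn ℝ 3 f2 Ω)
    (hg1 : ContDiffOn ℝ 3 g1 Ω) (hg2 : ContDiffOn ℝ 3 g2 Ω)
    (hJf : ∀ p ∈ Ω, 0 < JF f1 f2 p) (hJg : ∀ p ∈ Ω, 0 < JF g1 g2 p)
    (hP : ∀ p ∈ Ω, PS f1 f2 p = PS g1 g2 p) :
    ∃ c : ℝ, 0 < c ∧ ∀ p ∈ Ω, JF f1 f2 p = c * JF g1 g2 p :=
  exists_eq_const_mul_of_ZD_Cplx_log_eqOn hΩ hconn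
    (contDiffOn_JF hΩ hf1 hf2 (by norm_num)) (contDiffOn_JF hΩ hg1 hg2 (by norm_num)) hJf hJg hP

/-- on a connected open set, smooth maps with positive horizontal Jacobians
and equal Preschwarzians have proportional Jacobians: J_F = c·J_G for some c > 0. -/
theorem stmt_12 (Ω : Set Heis) (hΩ : IsOpen Ω) (hconn : IsConnected Ω)
    (f1 f2 f3 g1 g2 g3 : Heis → ℝ)
    (hf1 : ContDiffOn ℝ (⊤ : ℕ∞) f1 Ω) (hf2 : ContDiffOn ℝ (⊤ : ℕ∞) f2 Ω)
    (hf3 : ContDiffOn ℝ (⊤ : ℕ∞) f3 Ω)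
    (hg1 : ContDiffOn ℝ (⊤ : ℕ∞) g1 Ω) (hg2 : ContDiffOn ℝ (⊤ : ℕ∞) g2 Ω)
    (hg3 : ContDiffOn ℝ (⊤ : ℕ∞) g3 Ω)
    (hJf : ∀ p ∈ Ω, 0 < JF f1 f2 p) (hJg : ∀ p ∈ Ω, 0 < JF g1 g2 p)
    (hP : ∀ p ∈ Ω, PS f1 f2 p = PS g1 g2 p) :
    ∃ c : ℝ, 0 < c ∧ ∀ p ∈ Ω, JF f1 f2 p = c * JF g1 g2 p := by
  have three_le : (3 : WithTop ℕ∞) ≤ (⊤ : ℕ∞) := by norm_cast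
  exact stmt_12_general hΩ hconn.isPreconnected (hf1.of_le three_le) (hf2.of_le three_le)
    (hg1.of_le three_le) (hg2.of_le three_le) hJf hJg hP
end
end
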